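/- arXiv:1707.06177 — 3 statements merged into one kernel-verified Lean document; each statement's English description precedes it below -/
import Mathlib

section
/- Let a_1, …, a_7, b be real numbers with 0 ≤ a_1 ≤ a_2 ≤ … ≤ a_7 < 1 and b ≥ 0, and assume 1 + a_2 + a_3 ≤ a_4 + a_5 + a_6. If a_2 − a_1 ≥ 23/25, then F(a_1,…,a_7,b) + (1/8)·P·(a_4+a_5+a_6−1−a_2−a_3)^3 < 0. Moreover, under the same hypotheses on a_1, …, a_6, b (with 0 ≤ a_1 ≤ … ≤ a_6 < 1, b ≥ 0 and 1 + a_2 + a_3 ≤ a_4 + a_5 + a_6), if a_2 − a_1 ≥ 9/10 then the same expression evaluated with a_7 = 1 is negative. -/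
/-- The Donaldson–Futaki polynomial `F` for polarizations of `ℙ¹ × ℙ¹`-type on a
smooth del Pezzo surface of degree `1` (degree `2` upon substituting `a₇ = 1`). -/
noncomputable def Fpoly (a1 a2 a3 a4 a5 a6 a7 b : ℝ) : ℝ :=
  let P := 1 + 2 * b + a1 + a2 + a3 + a4 + a5 + a6 + a7
  let Q := 1 + 4 * b + 2 * (a1 + a2 + a3 + a4 + a5 + a6 + a7) -
    (a1 ^ 2 + a2 ^ 2 + a3 ^ 2 + a4 ^ 2 + a5 ^ 2 + a6 ^ 2 + a7 ^ 2)
  let T := 1 + 2 * b + 2 * a1 + a2 + a3 + a4 + a5 + a6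
  let S := a2 + a3 + a4 + a5 + a6
  (-(1 / 8) * T ^ 3 * P - (3 / 4) * (1 - a1) * T ^ 2 * P + (3 / 4) * T ^ 2 * Q +
    (3 / 2) * (1 - a1) * T * Q + (1 / 8) * P * (-1 + 2 * b + S) ^ 3 +
    (1 / 8) * P * (-1 + S) ^ 3)

/-!
Put `S = a₂ + ⋯ + a₆` and `R = 1 + a₁² + ⋯ + a₇²`. Since `Q = 2P - R`, the polynomial `F` becomes
a multiple of `P` minus a multiple of `R`, and the terms of degree two in `b` cancel in the
multiple of `P`:
`F = ((3/2)(3 + a₁²)(2b + S - 1) + 8 + 6a₁ + 2a₁³ + (S - 1)³/8) P - (3/4) T (2b + S + 3) R`.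
The correction term only adds a cube to the factor of `P`. The claim thus compares two products of
affine functions of `b`, and for `b ≥ 0` it is enough to compare coefficients. The hypotheses keep
`(a₁, …, a₇)` close to `(0, 1, …, 1)`; in the deviations `s = a₁`, `X = Σ_{2 ≤ i ≤ 6} (1 - aᵢ)`,
`y = 1 - a₇` and `D = a₄ + a₅ + a₆ - 1 - a₂ - a₃` they give `X + y + 4s + D ≤ 2/5`, and `R` is
bounded below by Cauchy–Schwarz.
-/

lemma Fpoly_eq (a1 a2 a3 a4 a5 a6 a7 b : ℝ) :
    Fpoly a1 a2 a3 a4 a5 a6 a7 b =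
      ((3 / 2) * (3 + a1 ^ 2) * (2 * b + (a2 + a3 + a4 + a5 + a6) - 1) +
          8 + 6 * a1 + 2 * a1 ^ 3 + (1 / 8) * (a2 + a3 + a4 + a5 + a6 - 1) ^ 3) *
          (1 + 2 * b + a1 + a2 + a3 + a4 + a5 + a6 + a7) -
        (3 / 4) * (1 + 2 * b + 2 * a1 + a2 + a3 + a4 + a5 + a6) *
          (2 * b + (a2 + a3 + a4 + a5 + a6) + 3) *
          (1 + a1 ^ 2 + a2 ^ 2 + a3 ^ 2 + a4 ^ 2 + a5 ^ 2 + a6 ^ 2 + a7 ^ 2) := by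
  simp only [Fpoly]
  ring

lemma affine_mul_affine_lt {K : Type*} [CommRing K] [LinearOrder K] [IsStrictOrderedRing K]
    {c₀ c₁ p₀ p₁ t₀ t₁ u₀ u₁ b : K} (hb : 0 ≤ b) (h₀ : c₀ * p₀ < t₀ * u₀)
    (h₁ : c₀ * p₁ + c₁ * p₀ ≤ t₀ * u₁ + t₁ * u₀) (h₂ : c₁ * p₁ ≤ t₁ * u₁) :
    (c₀ + c₁ * b) * (p₀ + p₁ * b) < (t₀ + t₁ * b) * (u₀ + u₁ * b) :=
  calc (c₀ + c₁ * b) * (p₀ + p₁ * b)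
      = c₀ * p₀ + (c₀ * p₁ + c₁ * p₀) * b + c₁ * p₁ * b ^ 2 := by ring
    _ < t₀ * u₀ + (t₀ * u₁ + t₁ * u₀) * b + t₁ * u₁ * b ^ 2 := by
        linarith [mul_le_mul_of_nonneg_right h₁ hb, mul_le_mul_of_nonneg_right h₂ (sq_nonneg b)]
    _ = (t₀ + t₁ * b) * (u₀ + u₁ * b) := by ring

/-- The factor of `P` in `F` plus its correction term at `b = 0`, written in the deviations
`s`, `X`, `D` from the vertex `(0, 1, …, 1)`. For general `b` one adds `(9 + 3s²) b`. -/
noncomputable def futakiFactor (s X D : ℝ) : ℝ :=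
  (3 / 2) * (3 + s ^ 2) * (4 - X) + 8 + 6 * s + 2 * s ^ 3 + (1 / 8) * (4 - X) ^ 3 + (1 / 8) * D ^ 3

section Coefficients

variable {s X y D r : ℝ}

lemma futakiFactor_le (hs : 0 ≤ s) (hs' : s ≤ 1 / 10) (hX : 0 ≤ X) (hD : 0 ≤ D) (hD' : D ≤ 1 / 5) :
    futakiFactor s X D ≤ 34 - 21 / 2 * X + 3 / 2 * X ^ 2 + 7 * s + D / 200 := by
  have s_sq_le : s ^ 2 ≤ s / 10 := by nlinarith
  have s_cube_le : s ^ 3 ≤ s / 100 := by nlinarith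
  have D_sq_le : D ^ 2 ≤ D / 5 := by nlinarith
  have D_cube_le : D ^ 3 ≤ D / 25 := by nlinarith
  have s_sq_mul_X_nonneg : 0 ≤ s ^ 2 * X := by positivity
  have X_cube_nonneg : 0 ≤ X ^ 3 := by positivity
  rw [futakiFactor]
  linarith

/-- This is the comparison for `b = s = D = 0`. When `X + y + 4s + D ≤ 2/5`, the extra summand is
at least `13s + (13/4)D`, which absorbs the terms in `s` and `D`. -/
lemma majorant_mul_add_lt_minorant_mul (hy : 0 ≤ y) (h : X + y ≤ 2 / 5) :
    (34 - 21 / 2 * X + 3 / 2 * X ^ 2) * (7 - X - y) + 13 / 4 * (2 / 5 - (X + y)) <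
      (36 - 21 / 2 * X + 3 / 4 * X ^ 2) * (7 - 2 * (X + y) + X ^ 2 / 5 + y ^ 2) := by
  have weight_ge : 31 ≤ 36 - 21 / 2 * X + 3 / 4 * X ^ 2 := by nlinarith
  have cauchy_schwarz :
      49 / 10 * (X + y) ^ 2 ≤ 31 * (X ^ 2 / 5 + y ^ 2) - 21 / 4 * y ^ 2 := by
    nlinarith [sq_nonneg (13 / 10 * X - 49 / 10 * y)]
  have one_variable : 13 / 4 * (2 / 5 - (X + y)) <
      14 - 38 * (X + y) + (21 / 4 + 49 / 10) * (X + y) ^ 2 := by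
    nlinarith [sq_nonneg (2 / 5 - (X + y))]
  have weighted : 31 * (X ^ 2 / 5 + y ^ 2) ≤
      (36 - 21 / 2 * X + 3 / 4 * X ^ 2) * (X ^ 2 / 5 + y ^ 2) := by gcongr
  linarith

lemma futakiFactor_mul_lt (hs : 0 ≤ s) (hX : 0 ≤ X) (hy : 0 ≤ y) (hD : 0 ≤ D) (hD' : D ≤ 1 / 5)
    (h : X + y + 4 * s + D ≤ 2 / 5) (hr : 7 - 2 * (X + y) + X ^ 2 / 5 + y ^ 2 ≤ r) :
    futakiFactor s X D * (7 + s - X - y) < (3 / 4) * (6 + 2 * s - X) * r * (8 - X) := by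
  have factor_le := futakiFactor_le hs (by linarith) hX hD hD'
  have gap := majorant_mul_add_lt_minorant_mul (X := X) hy (by linarith)
  have base_mul_s_le : (34 - 21 / 2 * X + 3 / 2 * X ^ 2) * s ≤ 34 * s := by
    gcongr; nlinarith
  have error_mul_le : (7 * s + D / 200) * (7 + s - X - y) ≤ (7 * s + D / 200) * (71 / 10) := by
    gcongr; linarith
  have s_gain : 71 * s ≤ (12 - 3 / 2 * X) * r * s := by
    gcongr; nlinarith
  calc futakiFactor s X D * (7 + s - X - y)
      ≤ (34 - 21 / 2 * X + 3 / 2 * X ^ 2 + 7 * s + D / 200) * (7 + s - X - y) := by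
        gcongr; linarith
    _ ≤ (34 - 21 / 2 * X + 3 / 2 * X ^ 2) * (7 - X - y) + 13 / 4 * (2 / 5 - (X + y)) + 71 * s := by
        linarith
    _ < (36 - 21 / 2 * X + 3 / 4 * X ^ 2) * (7 - 2 * (X + y) + X ^ 2 / 5 + y ^ 2) + 71 * s := by
        gcongr
    _ ≤ (36 - 21 / 2 * X + 3 / 4 * X ^ 2) * r + (12 - 3 / 2 * X) * r * s := by
        gcongr; nlinarith
    _ = (3 / 4) * (6 + 2 * s - X) * r * (8 - X) := by ring

lemma futakiFactor_linear_coeff_le (hs : 0 ≤ s) (hX : 0 ≤ X) (hy : 0 ≤ y) (hD : 0 ≤ D)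
    (hD' : D ≤ 1 / 5) (h : X + y + 4 * s + D ≤ 2 / 5) (hr : 7 - 2 * (X + y) ≤ r) :
    futakiFactor s X D * 2 + (9 + 3 * s ^ 2) * (7 + s - X - y) ≤
      (3 / 2) * (14 + 2 * s - 2 * X) * r := by
  have factor_le := futakiFactor_le hs (by linarith) hX hD hD'
  have X_sq_le : X ^ 2 ≤ 2 / 5 * X := by nlinarith
  have slope_mul_le : (9 + 3 * s ^ 2) * (7 + s - X - y) ≤ 63 - 9 * (X + y) + 12 * s := by
    nlinarith
  calc futakiFactor s X D * 2 + (9 + 3 * s ^ 2) * (7 + s - X - y)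
      ≤ 147 - 42 * (X + y) - 21 * X := by linarith
    _ ≤ (3 / 2) * (14 + 2 * s - 2 * X) * (7 - 2 * (X + y)) := by nlinarith
    _ ≤ (3 / 2) * (14 + 2 * s - 2 * X) * r := by gcongr; linarith

lemma futakiFactor_add_mul_lt {b : ℝ} (hb : 0 ≤ b) (hs : 0 ≤ s) (hX : 0 ≤ X) (hy : 0 ≤ y)
    (hD : 0 ≤ D) (hD' : D ≤ 1 / 5) (h : X + y + 4 * s + D ≤ 2 / 5)
    (hr : 7 - 2 * (X + y) + X ^ 2 / 5 + y ^ 2 ≤ r) :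
    (futakiFactor s X D + (9 + 3 * s ^ 2) * b) * (7 + s - X - y + 2 * b) <
      ((3 / 4) * (6 + 2 * s - X) * r + (3 / 2) * r * b) * (8 - X + 2 * b) := by
  have r_ge : 7 - 2 * (X + y) ≤ r := by linarith [sq_nonneg X, sq_nonneg y]
  refine affine_mul_affine_lt hb (futakiFactor_mul_lt hs hX hy hD hD' h hr) ?_ ?_
  · linarith [futakiFactor_linear_coeff_le hs hX hy hD hD' h r_ge]
  · nlinarith

end Coefficients

theorem Fpoly_corr1_negative_general {a1 a2 a3 a4 a5 a6 a7 b : ℝ} (h1 : 0 ≤ a1)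
    (h456 : a4 + a5 + a6 ≤ 3) (h7 : a7 ≤ 1) (hb : 0 ≤ b) (hD : 1 + a2 + a3 ≤ a4 + a5 + a6)
    (hvertex : 2 * a1 + (1 - a2) + (1 - a3) + (1 - a7) / 2 ≤ 1 / 5) :
    Fpoly a1 a2 a3 a4 a5 a6 a7 b +
      (1 / 8) * (1 + 2 * b + a1 + a2 + a3 + a4 + a5 + a6 + a7) *
        (a4 + a5 + a6 - 1 - a2 - a3) ^ 3 < 0 := by
  have cauchy_schwarz : ((1 - a2) + (1 - a3) + (1 - a4) + (1 - a5) + (1 - a6)) ^ 2 ≤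
      5 * ((1 - a2) ^ 2 + (1 - a3) ^ 2 + (1 - a4) ^ 2 + (1 - a5) ^ 2 + (1 - a6) ^ 2) := by
    simpa [Fin.sum_univ_five] using
      sq_sum_le_card_mul_sum_sq (s := Finset.univ) (f := ![1 - a2, 1 - a3, 1 - a4, 1 - a5, 1 - a6])
  have key := futakiFactor_add_mul_lt (s := a1) (y := 1 - a7) (D := a4 + a5 + a6 - 1 - a2 - a3)
    (X := (1 - a2) + (1 - a3) + (1 - a4) + (1 - a5) + (1 - a6))
    (r := 1 + a1 ^ 2 + a2 ^ 2 + a3 ^ 2 + a4 ^ 2 + a5 ^ 2 + a6 ^ 2 + a7 ^ 2) hb h1 (by linarith)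
    (by linarith) (by linarith) (by linarith) (by linarith)
    (by linarith [sq_nonneg a1, cauchy_schwarz])
  rw [futakiFactor] at key
  rw [Fpoly_eq]
  linear_combination key

theorem Fpoly_corr1_negative :
    (∀ a1 a2 a3 a4 a5 a6 a7 b : ℝ,
      0 ≤ a1 → a1 ≤ a2 → a2 ≤ a3 → a3 ≤ a4 → a4 ≤ a5 → a5 ≤ a6 → a6 ≤ a7 → a7 < 1 →
      0 ≤ b → 1 + a2 + a3 ≤ a4 + a5 + a6 → a2 - a1 ≥ 23 / 25 →
      Fpoly a1 a2 a3 a4 a5 a6 a7 b +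
        (1 / 8) * (1 + 2 * b + a1 + a2 + a3 + a4 + a5 + a6 + a7) *
          (a4 + a5 + a6 - 1 - a2 - a3) ^ 3 < 0) ∧
    (∀ a1 a2 a3 a4 a5 a6 b : ℝ,
      0 ≤ a1 → a1 ≤ a2 → a2 ≤ a3 → a3 ≤ a4 → a4 ≤ a5 → a5 ≤ a6 → a6 < 1 →
      0 ≤ b → 1 + a2 + a3 ≤ a4 + a5 + a6 → a2 - a1 ≥ 9 / 10 →
      Fpoly a1 a2 a3 a4 a5 a6 1 b +
        (1 / 8) * (1 + 2 * b + a1 + a2 + a3 + a4 + a5 + a6 + 1) *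
          (a4 + a5 + a6 - 1 - a2 - a3) ^ 3 < 0) := by
  refine ⟨fun a1 a2 a3 a4 a5 a6 a7 b h1 _ h23 _ h45 h56 h67 h7 hb hD hgap => ?_,
    fun a1 a2 a3 a4 a5 a6 b h1 _ h23 _ h45 h56 h6 hb hD hgap => ?_⟩
  · exact Fpoly_corr1_negative_general h1 (by linarith) h7.le hb hD (by linarith)
  · exact Fpoly_corr1_negative_general h1 (by linarith) le_rfl hb hD (by linarith)
end

section
/- Let a_1, …, a_7, b be real numbers with 0 ≤ a_1 ≤ a_2 ≤ … ≤ a_7 < 1 and b ≥ 0, and assume a_3 + a_4 + a_6 ≥ 1 + a_2 + a_5. If a_2 − a_1 ≥ 23/25, then F(a_1,…,a_7,b) + (1/8)·P·( (a_4+a_5+a_6−1−a_2−a_3)^3 + (a_3+a_5+a_6−1−a_2−a_4)^3 + (a_3+a_4+a_6−1−a_2−a_5)^3 ) < 0. Moreover, under the same hypotheses on a_1, …, a_6, b (with 0 ≤ a_1 ≤ … ≤ a_6 < 1, b ≥ 0 and a_3 + a_4 + a_6 ≥ 1 + a_2 + a_5), if a_2 − a_1 ≥ 9/10 then the same expression evaluated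 with a_7 = 1 is negative. -/
/-!
Write `uᵢ = 1 - aᵢ` for `2 ≤ i ≤ 7`, so that the polarization is a perturbation of
`(a₁, u₂, …, u₇) = 0`. Since `P`, `Q` and `-1 + 2b + S` are affine in `T` with coefficients
depending on the `aᵢ` only, the corrected quantity is a polynomial in `T`; its terms of degree
`4` and `3` cancel, and a quadratic with small data `a₁`, `∑ uᵢ`, `∑ uᵢ²` remains. The linear
constraints bound `a₁ + u₂ + ⋯ + u₆ + 2 u₇` by `2 / 5`, which forces `T ≥ 28 / 5`, and makes the
quadratic negative at `28 / 5` and decreasing beyond. The value at `28 / 5` is negative only thanks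
to `∑ uᵢ²`, which Cauchy–Schwarz bounds from below.
-/

theorem quadratic_neg_of_le {R : Type*} [CommRing R] [LinearOrder R] [IsStrictOrderedRing R]
    {α β γ t₀ t : R} (hα : α ≤ 0) (hslope : 2 * α * t₀ + β ≤ 0)
    (hvalue : α * t₀ ^ 2 + β * t₀ + γ < 0) (ht : t₀ ≤ t) :
    α * t ^ 2 + β * t + γ < 0 := by
  have hdiff : α * (t - t₀) ^ 2 ≤ 0 := mul_nonpos_of_nonpos_of_nonneg hα (sq_nonneg _)
  have hlin : (2 * α * t₀ + β) * (t - t₀) ≤ 0 :=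
    mul_nonpos_of_nonpos_of_nonneg hslope (sub_nonneg.2 ht)
  calc α * t ^ 2 + β * t + γ
      = (α * t₀ ^ 2 + β * t₀ + γ) + (2 * α * t₀ + β) * (t - t₀) + α * (t - t₀) ^ 2 := by ring
    _ < 0 := by linarith

theorem cube_le_of_le_add {R : Type*} [CommRing R] [LinearOrder R] [IsStrictOrderedRing R]
    {w y z ε : R} (hw : w ≤ y + z) (h₀ : 0 ≤ y + z) (hε : y + z ≤ ε) :
    w ^ 3 ≤ 2 * ε * (y ^ 2 + z ^ 2) :=
  calc w ^ 3 ≤ (y + z) ^ 3 := (show Odd 3 by decide).pow_le_pow.2 hw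
    _ = (y + z) * (y + z) ^ 2 := by ring
    _ ≤ ε * (2 * (y ^ 2 + z ^ 2)) :=
      mul_le_mul hε add_sq_le (sq_nonneg _) (h₀.trans hε)
    _ = 2 * ε * (y ^ 2 + z ^ 2) := by ring

namespace Fpoly

/-- The linear size `u₂ + ⋯ + u₆` of the perturbation, where `uᵢ = 1 - aᵢ`; `u₇` is kept apart
because it does not enter `S` and `T`. -/
def deficit (a2 a3 a4 a5 a6 : ℝ) : ℝ :=
  (1 - a2) + (1 - a3) + (1 - a4) + (1 - a5) + (1 - a6)

/-- The quadratic size `u₂² + ⋯ + u₇²` of the perturbation, where `uᵢ = 1 - aᵢ`. -/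
def sqDeficit (a2 a3 a4 a5 a6 a7 : ℝ) : ℝ :=
  (1 - a2) ^ 2 + (1 - a3) ^ 2 + (1 - a4) ^ 2 + (1 - a5) ^ 2 + (1 - a6) ^ 2 + (1 - a7) ^ 2

/-- The three cubes whose multiple by `P / 8` corrects `Fpoly`. -/
def cubeCorr (a2 a3 a4 a5 a6 : ℝ) : ℝ :=
  (a4 + a5 + a6 - 1 - a2 - a3) ^ 3 + (a3 + a5 + a6 - 1 - a2 - a4) ^ 3 +
    (a3 + a4 + a6 - 1 - a2 - a5) ^ 3

/-- The coefficient of `T ^ 2` in eight times the corrected polynomial. In this and the next two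
definitions `x = a₁`, `v = 1 - a₇`, while `σ`, `q` and `κ` stand for the values of `deficit`,
`sqDeficit` and `cubeCorr`. -/
def quadCoeff (x σ v q : ℝ) : ℝ :=
  6 * x ^ 2 - 6 + 12 * (σ + v) - 6 * q

/-- The coefficient of `T` in eight times the corrected polynomial. -/
def linCoeff (x σ v q κ : ℝ) : ℝ :=
  (4 - σ) ^ 3 + κ - 8 * (1 + x) ^ 3 - 12 * (1 + x) ^ 2 * v - 12 * (1 - x) * (4 - 2 * σ + q)

/-- The coefficient of `T ^ 0` in eight times the corrected polynomial. -/
def constCoeff (x σ v κ : ℝ) : ℝ :=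
  (1 - x - v) * ((4 - σ) ^ 3 + κ - 8 * (1 + x) ^ 3)

theorem eight_mul_add_cubeCorr (a1 a2 a3 a4 a5 a6 a7 b : ℝ) :
    8 * (Fpoly a1 a2 a3 a4 a5 a6 a7 b +
        (1 / 8) * (1 + 2 * b + a1 + a2 + a3 + a4 + a5 + a6 + a7) * cubeCorr a2 a3 a4 a5 a6) =
      quadCoeff a1 (deficit a2 a3 a4 a5 a6) (1 - a7) (sqDeficit a2 a3 a4 a5 a6 a7) *
          (1 + 2 * b + 2 * a1 + a2 + a3 + a4 + a5 + a6) ^ 2 +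
        linCoeff a1 (deficit a2 a3 a4 a5 a6) (1 - a7) (sqDeficit a2 a3 a4 a5 a6 a7)
            (cubeCorr a2 a3 a4 a5 a6) *
          (1 + 2 * b + 2 * a1 + a2 + a3 + a4 + a5 + a6) +
        constCoeff a1 (deficit a2 a3 a4 a5 a6) (1 - a7) (cubeCorr a2 a3 a4 a5 a6) := by
  generalize cubeCorr a2 a3 a4 a5 a6 = κ
  simp only [Fpoly, deficit, sqDeficit, quadCoeff, linCoeff, constCoeff]
  ring

theorem sq_deficit_add_le (a2 a3 a4 a5 a6 a7 : ℝ) :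
    (deficit a2 a3 a4 a5 a6 + (1 - a7)) ^ 2 ≤ 6 * sqDeficit a2 a3 a4 a5 a6 a7 := by
  simpa [deficit, sqDeficit, Fin.sum_univ_six] using
    sq_sum_le_card_mul_sum_sq (s := Finset.univ)
      (f := ![1 - a2, 1 - a3, 1 - a4, 1 - a5, 1 - a6, 1 - a7])

section Perturbation

variable {a2 a3 a4 a5 a6 : ℝ}

theorem deficit_nonneg (h2 : a2 ≤ 1) (h3 : a3 ≤ 1) (h4 : a4 ≤ 1) (h5 : a5 ≤ 1) (h6 : a6 ≤ 1) :
    0 ≤ deficit a2 a3 a4 a5 a6 := by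
  simp only [deficit]
  linarith

theorem cubeCorr_le {ε : ℝ} (a7 : ℝ) (h2 : a2 ≤ 1) (h3 : a3 ≤ 1) (h4 : a4 ≤ 1) (h5 : a5 ≤ 1)
    (h6 : a6 ≤ 1) (hε : deficit a2 a3 a4 a5 a6 ≤ ε) :
    cubeCorr a2 a3 a4 a5 a6 ≤ 6 * ε * sqDeficit a2 a3 a4 a5 a6 a7 := by
  have hε₀ : 0 ≤ ε := (deficit_nonneg h2 h3 h4 h5 h6).trans hε
  simp only [deficit] at hε
  have cube₃ : (a4 + a5 + a6 - 1 - a2 - a3) ^ 3 ≤ 2 * ε * ((1 - a2) ^ 2 + (1 - a3) ^ 2) :=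
    cube_le_of_le_add (by linarith) (by linarith) (by linarith)
  have cube₄ : (a3 + a5 + a6 - 1 - a2 - a4) ^ 3 ≤ 2 * ε * ((1 - a2) ^ 2 + (1 - a4) ^ 2) :=
    cube_le_of_le_add (by linarith) (by linarith) (by linarith)
  have cube₅ : (a3 + a4 + a6 - 1 - a2 - a5) ^ 3 ≤ 2 * ε * ((1 - a2) ^ 2 + (1 - a5) ^ 2) :=
    cube_le_of_le_add (by linarith) (by linarith) (by linarith)
  calc cubeCorr a2 a3 a4 a5 a6
      ≤ 2 * ε * (3 * (1 - a2) ^ 2 + (1 - a3) ^ 2 + (1 - a4) ^ 2 + (1 - a5) ^ 2) := by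
        simp only [cubeCorr]
        linarith
    _ ≤ 2 * ε * (3 * sqDeficit a2 a3 a4 a5 a6 a7) := by
        simp only [sqDeficit]
        gcongr
        linarith [sq_nonneg (1 - a3), sq_nonneg (1 - a4), sq_nonneg (1 - a5),
          sq_nonneg (1 - a6), sq_nonneg (1 - a7)]
    _ = 6 * ε * sqDeficit a2 a3 a4 a5 a6 a7 := by ring

end Perturbation

section Coefficients

variable {x σ v q κ : ℝ}

theorem quadCoeff_le (hx : 0 ≤ x) (hx' : x ≤ 2 / 5) :
    quadCoeff x σ v q ≤ -6 + 12 / 5 * x + 12 * (σ + v) - 6 * q := by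
  have hsq : x ^ 2 ≤ 2 / 5 * x := by
    rw [sq]
    exact mul_le_mul_of_nonneg_right hx' hx
  simp only [quadCoeff]
  linarith

theorem cube_four_sub_le (hσ : 0 ≤ σ) (hσ' : σ ≤ 2 / 5) : (4 - σ) ^ 3 ≤ 64 - 43 * σ := by
  have hprod : 0 ≤ σ * (5 - 12 * σ + σ ^ 2) := mul_nonneg hσ (by linarith [sq_nonneg σ])
  linarith

theorem one_add_three_mul_le_cube (hx : 0 ≤ x) : 1 + 3 * x ≤ (1 + x) ^ 3 := by
  exact_mod_cast one_add_mul_le_pow (by linarith : -2 ≤ x) 3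

theorem linCoeff_le (hx : 0 ≤ x) (hx' : x ≤ 2 / 5) (hσ : 0 ≤ σ) (hσ' : σ ≤ 2 / 5) (hv : 0 ≤ v)
    (hq : 0 ≤ q) (hκ : κ ≤ 12 / 5 * q) :
    linCoeff x σ v q κ ≤ 8 - 19 * σ + 24 * x - 12 * v := by
  have hW := cube_four_sub_le hσ hσ'
  have hn := one_add_three_mul_le_cube hx
  have hv_le : v ≤ (1 + x) ^ 2 * v :=
    le_mul_of_one_le_left hv (one_le_pow₀ (by linarith))
  have hxq : x * q ≤ 2 / 5 * q := mul_le_mul_of_nonneg_right hx' hq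
  have hxσ : 0 ≤ x * σ := mul_nonneg hx hσ
  simp only [linCoeff]
  linarith

theorem constCoeff_le (hx : 0 ≤ x) (hσ : 0 ≤ σ) (hv : 0 ≤ v) (hsum : x + σ + 2 * v ≤ 2 / 5)
    (hq : 0 ≤ q) (hκ : κ ≤ 12 / 5 * q) :
    constCoeff x σ v κ ≤ 56 - 43 * σ - 24 * x + 12 / 5 * q := by
  have hW := cube_four_sub_le hσ (by linarith)
  have hn := one_add_three_mul_le_cube hx
  calc constCoeff x σ v κ
      ≤ (1 - x - v) * (56 - 43 * σ - 24 * x + 12 / 5 * q) :=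
        mul_le_mul_of_nonneg_left (by linarith) (by linarith)
    _ ≤ 56 - 43 * σ - 24 * x + 12 / 5 * q :=
        mul_le_of_le_one_left (by linarith) (by linarith)

theorem quadratic_neg {t : ℝ} (hx : 0 ≤ x) (hσ : 0 ≤ σ) (hv : 0 ≤ v)
    (hsum : x + σ + 2 * v ≤ 2 / 5) (hq : (σ + v) ^ 2 ≤ 6 * q) (hκ : κ ≤ 12 / 5 * q)
    (ht : 28 / 5 ≤ t) :
    quadCoeff x σ v q * t ^ 2 + linCoeff x σ v q κ * t + constCoeff x σ v κ < 0 := by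
  have hq₀ : 0 ≤ q := by linarith [sq_nonneg (σ + v)]
  have hquad : quadCoeff x σ v q ≤ -6 + 12 / 5 * x + 12 * (σ + v) - 6 * q :=
    quadCoeff_le hx (by linarith)
  have hlin : linCoeff x σ v q κ ≤ 8 - 19 * σ + 24 * x - 12 * v :=
    linCoeff_le hx (by linarith) hσ (by linarith) hv hq₀ hκ
  have hconst : constCoeff x σ v κ ≤ 56 - 43 * σ - 24 * x + 12 / 5 * q :=
    constCoeff_le hx hσ hv hsum hq₀ hκ
  -- The tangent line of `(σ + v) ^ 2` at the extreme case `σ = 2 / 5`, `v = 0`.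
  have hq_tangent : 4 / 5 * (σ + v) - 4 / 25 ≤ 6 * q := by
    linarith [sq_nonneg (σ + v - 2 / 5)]
  exact quadratic_neg_of_le (by linarith) (by linarith) (by linarith) ht

end Coefficients

theorem add_deficit_add_le {a1 a2 a3 a4 a5 a6 a7 : ℝ} (h1 : 0 ≤ a1) (h34 : a3 ≤ a4)
    (h45 : a4 ≤ a5) (h67 : a6 ≤ a7) (hc : 1 + a2 + a5 ≤ a3 + a4 + a6) (hgap : 9 / 10 ≤ a2 - a1) :
    a1 + deficit a2 a3 a4 a5 a6 + 2 * (1 - a7) ≤ 2 / 5 := by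
  simp only [deficit]
  linarith

end Fpoly

open Fpoly in
theorem Fpoly_corr3_negative_general {a1 a2 a3 a4 a5 a6 a7 b : ℝ} (h1 : 0 ≤ a1) (h2 : a2 ≤ 1)
    (h3 : a3 ≤ 1) (h4 : a4 ≤ 1) (h5 : a5 ≤ 1) (h6 : a6 ≤ 1) (h7 : a7 ≤ 1) (hb : 0 ≤ b)
    (hsum : a1 + ((1 - a2) + (1 - a3) + (1 - a4) + (1 - a5) + (1 - a6)) + 2 * (1 - a7) ≤ 2 / 5) :
    Fpoly a1 a2 a3 a4 a5 a6 a7 b +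
      (1 / 8) * (1 + 2 * b + a1 + a2 + a3 + a4 + a5 + a6 + a7) *
        ((a4 + a5 + a6 - 1 - a2 - a3) ^ 3 +
          (a3 + a5 + a6 - 1 - a2 - a4) ^ 3 +
          (a3 + a4 + a6 - 1 - a2 - a5) ^ 3) < 0 := by
  have hcorr : cubeCorr a2 a3 a4 a5 a6 ≤ 12 / 5 * sqDeficit a2 a3 a4 a5 a6 a7 := by
    have hdeficit : deficit a2 a3 a4 a5 a6 ≤ 2 / 5 := by
      simp only [deficit]
      linarith
    linarith [cubeCorr_le a7 h2 h3 h4 h5 h6 hdeficit]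
  have hneg := quadratic_neg h1 (deficit_nonneg h2 h3 h4 h5 h6) (sub_nonneg.2 h7) hsum
    (sq_deficit_add_le a2 a3 a4 a5 a6 a7) hcorr
    (t := 1 + 2 * b + 2 * a1 + a2 + a3 + a4 + a5 + a6) (by linarith)
  rw [← eight_mul_add_cubeCorr] at hneg
  exact neg_of_mul_neg_right hneg (by norm_num)

theorem Fpoly_corr3_negative :
    (∀ a1 a2 a3 a4 a5 a6 a7 b : ℝ,
      0 ≤ a1 → a1 ≤ a2 → a2 ≤ a3 → a3 ≤ a4 → a4 ≤ a5 → a5 ≤ a6 → a6 ≤ a7 → a7 < 1 →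
      0 ≤ b → a3 + a4 + a6 ≥ 1 + a2 + a5 → a2 - a1 ≥ 23 / 25 →
      Fpoly a1 a2 a3 a4 a5 a6 a7 b +
        (1 / 8) * (1 + 2 * b + a1 + a2 + a3 + a4 + a5 + a6 + a7) *
          ((a4 + a5 + a6 - 1 - a2 - a3) ^ 3 +
            (a3 + a5 + a6 - 1 - a2 - a4) ^ 3 +
            (a3 + a4 + a6 - 1 - a2 - a5) ^ 3) < 0) ∧
    (∀ a1 a2 a3 a4 a5 a6 b : ℝ,
      0 ≤ a1 → a1 ≤ a2 → a2 ≤ a3 → a3 ≤ a4 → a4 ≤ a5 → a5 ≤ a6 → a6 < 1 →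
      0 ≤ b → a3 + a4 + a6 ≥ 1 + a2 + a5 → a2 - a1 ≥ 9 / 10 →
      Fpoly a1 a2 a3 a4 a5 a6 1 b +
        (1 / 8) * (1 + 2 * b + a1 + a2 + a3 + a4 + a5 + a6 + 1) *
          ((a4 + a5 + a6 - 1 - a2 - a3) ^ 3 +
            (a3 + a5 + a6 - 1 - a2 - a4) ^ 3 +
            (a3 + a4 + a6 - 1 - a2 - a5) ^ 3) < 0) := by
  constructor
  · intro a1 a2 a3 a4 a5 a6 a7 b h1 _ _ h34 h45 h56 h67 h7 hb hc hgap
    exact Fpoly_corr3_negative_general h1 (by linarith) (by linarith) (by linarith) (by linarith)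
      (by linarith) h7.le hb (Fpoly.add_deficit_add_le h1 h34 h45 h67 hc (by linarith))
  · intro a1 a2 a3 a4 a5 a6 b h1 _ _ h34 h45 h56 h6 hb hc hgap
    exact Fpoly_corr3_negative_general h1 (by linarith) (by linarith) (by linarith) (by linarith)
      h6.le le_rfl hb (Fpoly.add_deficit_add_le h1 h34 h45 h6.le hc hgap)
end

section
/- Let a_1, …, a_7, b be real numbers with 0 ≤ a_1 ≤ a_2 ≤ … ≤ a_7 < 1 and b ≥ 0, and assume a_2 + a_5 + a_6 ≥ 1 + a_3 + a_4. If a_2 − a_1 ≥ 23/25, then F(a_1,…,a_7,b) + (1/8)·P·( (a_4+a_5+a_6−1−a_2−a_3)^3 + (a_3+a_5+a_6−1−a_2−a_4)^3 + (a_3+a_4+a_6−1−a_2−a_5)^3 + (a_2+a_5+a_6−1−a_3−a_4)^3 ) < 0. Moreover, under the same hypotheses on a_1, …, a_6, b (with 0 ≤ a_1 ≤ … ≤ a_6 < 1, b ≥ 0 and a_2 + a_5 + a_6 ≥ 1 + a_3 + a_4), if a_2 − a_1 ≥ 9/10 then the same expression evaluated with a_7 = 1 is negative. -/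
/-! Once `P`, `Q` and `S` are expressed through `T`, the terms of degree at least three in `T`
cancel: with `t = T / 2 = t₀ + b`, the corrected `F` is a quadratic `A t² + B t + C` whose
coefficients do not involve `b`. Near the corner `a₁ = 0`, `a₂ = ⋯ = a₇ = 1` one has `A ≤ 0 ≤ C`, so
`A t + B + C / t` decreases in `t` and it is enough to treat `b = 0`. There the Cauchy–Schwarz
inequality and a bound on the sum of cubes leave a polynomial in `u = a₁`,
`s = ∑_{i=2}^6 (1 - aᵢ)` and `y = 1 - a₇`, which is at most
`-14 + 38 (s + y) - 10 (s + y)² + u / 2`. -/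

section OrderedRing

variable {R : Type*} [CommRing R] [LinearOrder R] [IsStrictOrderedRing R]

lemma quadratic_neg_of_le_of_neg {A B C t₀ t : R} (hA : A ≤ 0) (hC : 0 ≤ C) (ht₀ : 0 < t₀)
    (ht : t₀ ≤ t) (hneg : A * t₀ ^ 2 + B * t₀ + C < 0) : A * t ^ 2 + B * t + C < 0 := by
  have ht_pos : 0 < t := ht₀.trans_le ht
  have hslope : A * (t * t₀) - C ≤ 0 :=
    sub_nonpos.mpr ((mul_nonpos_of_nonpos_of_nonneg hA (mul_pos ht_pos ht₀).le).trans hC)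
  refine neg_of_mul_neg_right ?_ ht₀.le
  calc t₀ * (A * t ^ 2 + B * t + C)
      = t * (A * t₀ ^ 2 + B * t₀ + C) + (t - t₀) * (A * (t * t₀) - C) := by ring
    _ < 0 := add_neg_of_neg_of_nonpos (mul_neg_of_pos_of_neg ht_pos hneg)
        (mul_nonpos_of_nonneg_of_nonpos (sub_nonneg.mpr ht) hslope)

lemma pow_three_add_pow_three_nonpos {x y : R} (h : x + y ≤ 0) : x ^ 3 + y ^ 3 ≤ 0 := by
  have hodd : Odd 3 := by decide
  have hpow : x ^ 3 ≤ (-y) ^ 3 := hodd.pow_le_pow.mpr (le_neg_iff_add_nonpos_right.mpr h)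
  rwa [hodd.neg_pow, le_neg_iff_add_nonpos_right] at hpow

lemma sum_pow_three_le_two_mul_pow_three {x₂ x₃ x₄ x₅ x₆ : R} (h₃ : 0 ≤ x₃) (h₄ : 0 ≤ x₄)
    (h₅ : 0 ≤ x₅) (h₆ : 0 ≤ x₆) :
    (x₂ + x₃ - x₄ - x₅ - x₆) ^ 3 + (x₂ + x₄ - x₃ - x₅ - x₆) ^ 3 +
        (x₂ + x₅ - x₃ - x₄ - x₆) ^ 3 + (x₃ + x₄ - x₂ - x₅ - x₆) ^ 3 ≤
      2 * (x₂ + x₃ + x₄ + x₅ + x₆) ^ 3 := by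
  have hodd : Odd 3 := by decide
  have hfst : (x₂ + x₃ - x₄ - x₅ - x₆) ^ 3 ≤ (x₂ + x₃ + x₄ + x₅ + x₆) ^ 3 :=
    hodd.pow_le_pow.mpr (by linarith)
  have hsnd : (x₂ + x₄ - x₃ - x₅ - x₆) ^ 3 ≤ (x₂ + x₃ + x₄ + x₅ + x₆) ^ 3 :=
    hodd.pow_le_pow.mpr (by linarith)
  have hrest : (x₂ + x₅ - x₃ - x₄ - x₆) ^ 3 + (x₃ + x₄ - x₂ - x₅ - x₆) ^ 3 ≤ 0 :=
    pow_three_add_pow_three_nonpos (by linarith)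
  linarith

end OrderedRing

/-- The quantity `F + P * C / 8`, for an arbitrary correction `C`, in the variables
`u = a₁`, `s = ∑_{i=2}^6 (1 - aᵢ)`, `y = 1 - a₇`, `q = ∑_{i=2}^7 (1 - aᵢ)²`,
`M = ((S - 1) / 2)³ + C / 8` and `t = T / 2`. The factor `4 * t - 5 - ⋯` is `Q` and
`2 * t + 1 - u - y` is `P`. -/
noncomputable def futakiForm (u s y q M t : ℝ) : ℝ :=
  3 * t * (t + 1 - u) * (4 * t - 5 - 2 * u - u ^ 2 + 2 * s - q) -
    (2 * t + 1 - u - y) * (6 * t ^ 2 - 3 * (1 + u) ^ 2 * t + (1 + u) ^ 3 - M)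

lemma Fpoly_add_eq_futakiForm (a1 a2 a3 a4 a5 a6 a7 b C : ℝ) :
    Fpoly a1 a2 a3 a4 a5 a6 a7 b +
        (1 / 8) * (1 + 2 * b + a1 + a2 + a3 + a4 + a5 + a6 + a7) * C =
      futakiForm a1 ((1 - a2) + (1 - a3) + (1 - a4) + (1 - a5) + (1 - a6)) (1 - a7)
        ((1 - a2) ^ 2 + (1 - a3) ^ 2 + (1 - a4) ^ 2 + (1 - a5) ^ 2 + (1 - a6) ^ 2 + (1 - a7) ^ 2)
        (((a2 + a3 + a4 + a5 + a6 - 1) / 2) ^ 3 + C / 8)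
        ((1 + 2 * b + 2 * a1 + a2 + a3 + a4 + a5 + a6) / 2) := by
  unfold Fpoly futakiForm
  ring

section FutakiForm

variable {u s y q q' M M' t : ℝ}

lemma futakiForm_le_futakiForm (hu : u ≤ 1) (ht : 0 ≤ t) (hP : 0 ≤ 2 * t + 1 - u - y)
    (hq : q' ≤ q) (hM : M ≤ M') : futakiForm u s y q M t ≤ futakiForm u s y q' M' t := by
  have ht' : 0 ≤ t + 1 - u := by linarith
  unfold futakiForm
  gcongr

lemma futakiForm_eq_quadratic (u s y q M t : ℝ) :
    futakiForm u s y q M t =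
      (-3 + 3 * u ^ 2 + 6 * (s + y) - 3 * q) * t ^ 2 +
        (-14 + 6 * u - 6 * u ^ 2 - 2 * u ^ 3 + 6 * (1 - u) * s - 3 * (1 + u) ^ 2 * y -
          3 * (1 - u) * q + 2 * M) * t +
        (1 - u - y) * (M - (1 + u) ^ 3) := by
  unfold futakiForm
  ring

lemma futakiForm_neg_of_le {t₀ : ℝ} (hu : 0 ≤ u) (hu' : u ≤ 1 / 10) (hsy : s + y ≤ 2 / 5)
    (hy : y ≤ 2 / 5) (hq : 0 ≤ q) (hM : 2 ≤ M) (ht₀ : 0 < t₀) (ht : t₀ ≤ t)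
    (hneg : futakiForm u s y q M t₀ < 0) : futakiForm u s y q M t < 0 := by
  have husq : u ^ 2 ≤ (1 / 10) ^ 2 := by gcongr
  have hcube : (1 + u) ^ 3 ≤ (1 + 1 / 10) ^ 3 := by gcongr
  rw [futakiForm_eq_quadratic] at hneg ⊢
  refine quadratic_neg_of_le_of_neg ?_ (mul_nonneg ?_ ?_) ht₀ ht hneg <;> linarith

/-- The specialization of `futakiForm` to `b = 0`, that is `t = 3 + u - s / 2`, with `q` and `M`
replaced by the extreme values allowed by the Cauchy–Schwarz inequality and by the bound `2 * s ^ 3`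
on the sum of cubes. -/
noncomputable def extremalForm (u s y : ℝ) : ℝ :=
  futakiForm u s y (s ^ 2 / 5 + y ^ 2) ((2 - s / 2) ^ 3 + s ^ 3 / 4) (3 + u - s / 2)

lemma extremalForm_zero_le (hs : 0 ≤ s) (hy : 0 ≤ y) (hsy : s + y ≤ 2 / 5) :
    extremalForm 0 s y ≤ -14 + 38 * (s + y) - 10 * (s + y) ^ 2 := by
  have hcubic : 119 / 40 * s ^ 3 + 21 / 2 * (s * y ^ 2) ≤ 6 / 5 * s ^ 2 + 21 / 5 * y ^ 2 := by
    have hs' : 0 ≤ 2 / 5 - s := by linarith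
    linarith [mul_nonneg (sq_nonneg s) hs', mul_nonneg (sq_nonneg y) hs', sq_nonneg s]
  have hquartic : 0 ≤ 3 / 4 * (s ^ 2 * y ^ 2) + 1 / 8 * (s ^ 3 * y) + 11 / 40 * s ^ 4 := by
    positivity
  have hdisc : 0 ≤ 5 / 4 * s ^ 2 - 19 / 2 * (s * y) + 109 / 5 * y ^ 2 := by
    linarith [sq_nonneg (s - 19 / 5 * y), sq_nonneg y]
  have hexpand : extremalForm 0 s y =
      -14 + 38 * (s + y) - (249 / 20 * s ^ 2 + 21 / 2 * (s * y) + 36 * y ^ 2) +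
        (119 / 40 * s ^ 3 + 21 / 2 * (s * y ^ 2)) -
        (3 / 4 * (s ^ 2 * y ^ 2) + 1 / 8 * (s ^ 3 * y) + 11 / 40 * s ^ 4) := by
    unfold extremalForm futakiForm
    ring
  linarith

lemma extremalForm_le_zero_add (hu : 0 ≤ u) (hu' : u ≤ 1 / 10) (hs : 0 ≤ s) (hy : 0 ≤ y)
    (hsy : s + y ≤ 2 / 5) : extremalForm u s y ≤ extremalForm 0 s y + u / 2 := by
  have hlinear : -8 + 18 * (s + y) + 12 * u + 8 * u ^ 2 + 2 * u ^ 3 ≤ 1 / 2 := by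
    have husq : u ^ 2 ≤ (1 / 10) ^ 2 := by gcongr
    have hucube : u ^ 3 ≤ (1 / 10) ^ 3 := by gcongr
    linarith
  have hrest : 0 ≤ 12 * y ^ 2 + 3 / 2 * (s * y) * (2 - y) + s ^ 2 * (39 / 10 - 17 / 40 * s) +
      u * (3 / 2 * s * (2 - y) + 3 / 4 * s * (2 - s) + 3 / 2 * s + 6 * y) +
      2 * u ^ 2 * (s + y) := by
    have h2y : 0 ≤ 2 - y := by linarith
    have h2s : 0 ≤ 2 - s := by linarith
    have h39s : 0 ≤ 39 / 10 - 17 / 40 * s := by linarith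
    positivity
  have hexpand : extremalForm u s y = extremalForm 0 s y +
      u * (-8 + 18 * (s + y) + 12 * u + 8 * u ^ 2 + 2 * u ^ 3) -
      u * (12 * y ^ 2 + 3 / 2 * (s * y) * (2 - y) + s ^ 2 * (39 / 10 - 17 / 40 * s) +
        u * (3 / 2 * s * (2 - y) + 3 / 4 * s * (2 - s) + 3 / 2 * s + 6 * y) +
        2 * u ^ 2 * (s + y)) := by
    unfold extremalForm futakiForm
    ring
  linarith [mul_le_mul_of_nonneg_left hlinear hu, mul_nonneg hu hrest]

lemma extremalForm_neg (hu : 0 ≤ u) (hu' : u ≤ 1 / 10) (hs : 0 ≤ s) (hy : 0 ≤ y)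
    (hsy : s + y ≤ 2 / 5) : extremalForm u s y < 0 := by
  have hparabola : 38 * (s + y) - 10 * (s + y) ^ 2 ≤ 68 / 5 := by
    linarith [sq_nonneg (2 / 5 - (s + y))]
  linarith [extremalForm_le_zero_add hu hu' hs hy hsy, extremalForm_zero_le hs hy hsy]

lemma futakiForm_neg (hu : 0 ≤ u) (hu' : u ≤ 1 / 10) (hs : 0 ≤ s) (hy : 0 ≤ y)
    (hsy : s + y ≤ 2 / 5) (hq : s ^ 2 / 5 + y ^ 2 ≤ q) (hM : M ≤ (2 - s / 2) ^ 3 + s ^ 3 / 4)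
    (ht : 3 + u - s / 2 ≤ t) : futakiForm u s y q M t < 0 := by
  have hM_lower : 2 ≤ (2 - s / 2) ^ 3 + s ^ 3 / 4 := by
    have hcube : (3 / 2) ^ 3 ≤ (2 - s / 2) ^ 3 := by gcongr; linarith
    linarith [pow_nonneg hs 3]
  calc futakiForm u s y q M t
      ≤ futakiForm u s y (s ^ 2 / 5 + y ^ 2) ((2 - s / 2) ^ 3 + s ^ 3 / 4) t :=
        futakiForm_le_futakiForm (by linarith) (by linarith) (by linarith) hq hM
    _ < 0 := futakiForm_neg_of_le hu hu' hsy (by linarith) (by positivity) hM_lower (by linarith)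
        ht (extremalForm_neg hu hu' hs hy hsy)

end FutakiForm

lemma sq_sum_five_div_five_le (x₂ x₃ x₄ x₅ x₆ : ℝ) :
    (x₂ + x₃ + x₄ + x₅ + x₆) ^ 2 / 5 ≤ x₂ ^ 2 + x₃ ^ 2 + x₄ ^ 2 + x₅ ^ 2 + x₆ ^ 2 := by
  have hcauchy : (x₂ + x₃ + x₄ + x₅ + x₆) ^ 2 ≤
      5 * (x₂ ^ 2 + x₃ ^ 2 + x₄ ^ 2 + x₅ ^ 2 + x₆ ^ 2) := by
    simpa [Fin.sum_univ_five] using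
      sq_sum_le_card_mul_sum_sq (s := Finset.univ) (f := ![x₂, x₃, x₄, x₅, x₆])
  linarith

theorem Fpoly_corr4_negative_general {a1 a2 a3 a4 a5 a6 a7 b : ℝ} (h1 : 0 ≤ a1)
    (h1' : a1 ≤ 1 / 10) (h2 : a2 ≤ 1) (h3 : a3 ≤ 1) (h4 : a4 ≤ 1) (h5 : a5 ≤ 1) (h6 : a6 ≤ 1)
    (h7 : a7 ≤ 1) (hb : 0 ≤ b) (hsum : 28 / 5 ≤ a2 + a3 + a4 + a5 + a6 + a7) :
    Fpoly a1 a2 a3 a4 a5 a6 a7 b +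
      (1 / 8) * (1 + 2 * b + a1 + a2 + a3 + a4 + a5 + a6 + a7) *
        ((a4 + a5 + a6 - 1 - a2 - a3) ^ 3 +
          (a3 + a5 + a6 - 1 - a2 - a4) ^ 3 +
          (a3 + a4 + a6 - 1 - a2 - a5) ^ 3 +
          (a2 + a5 + a6 - 1 - a3 - a4) ^ 3) < 0 := by
  rw [Fpoly_add_eq_futakiForm]
  have hcubes := sum_pow_three_le_two_mul_pow_three (x₂ := 1 - a2) (sub_nonneg.mpr h3)
    (sub_nonneg.mpr h4) (sub_nonneg.mpr h5) (sub_nonneg.mpr h6)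
  have hsquares := sq_sum_five_div_five_le (1 - a2) (1 - a3) (1 - a4) (1 - a5) (1 - a6)
  apply futakiForm_neg <;> linarith

theorem Fpoly_corr4_negative :
    (∀ a1 a2 a3 a4 a5 a6 a7 b : ℝ,
      0 ≤ a1 → a1 ≤ a2 → a2 ≤ a3 → a3 ≤ a4 → a4 ≤ a5 → a5 ≤ a6 → a6 ≤ a7 → a7 < 1 →
      0 ≤ b → a2 + a5 + a6 ≥ 1 + a3 + a4 → a2 - a1 ≥ 23 / 25 →
      Fpoly a1 a2 a3 a4 a5 a6 a7 b +
        (1 / 8) * (1 + 2 * b + a1 + a2 + a3 + a4 + a5 + a6 + a7) *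
          ((a4 + a5 + a6 - 1 - a2 - a3) ^ 3 +
            (a3 + a5 + a6 - 1 - a2 - a4) ^ 3 +
            (a3 + a4 + a6 - 1 - a2 - a5) ^ 3 +
            (a2 + a5 + a6 - 1 - a3 - a4) ^ 3) < 0) ∧
    (∀ a1 a2 a3 a4 a5 a6 b : ℝ,
      0 ≤ a1 → a1 ≤ a2 → a2 ≤ a3 → a3 ≤ a4 → a4 ≤ a5 → a5 ≤ a6 → a6 < 1 →
      0 ≤ b → a2 + a5 + a6 ≥ 1 + a3 + a4 → a2 - a1 ≥ 9 / 10 →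
      Fpoly a1 a2 a3 a4 a5 a6 1 b +
        (1 / 8) * (1 + 2 * b + a1 + a2 + a3 + a4 + a5 + a6 + 1) *
          ((a4 + a5 + a6 - 1 - a2 - a3) ^ 3 +
            (a3 + a5 + a6 - 1 - a2 - a4) ^ 3 +
            (a3 + a4 + a6 - 1 - a2 - a5) ^ 3 +
            (a2 + a5 + a6 - 1 - a3 - a4) ^ 3) < 0) := by
  constructor
  · intro a1 a2 a3 a4 a5 a6 a7 b h1 _ h23 h34 _ h56 h67 h7 hb hcorr hgap
    have hsum : 28 / 5 ≤ a2 + a3 + a4 + a5 + a6 + a7 := calc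
      28 / 5 ≤ (1 + 4 * a2) + (1 + a2) / 2 := by linarith
      _ ≤ (a2 + a3 + a4 + a5 + a6) + a7 := add_le_add (by linarith) (by linarith)
    refine Fpoly_corr4_negative_general h1 ?_ ?_ ?_ ?_ ?_ ?_ ?_ hb hsum <;> linarith
  · intro a1 a2 a3 a4 a5 a6 b h1 _ h23 h34 _ h56 h6 hb hcorr hgap
    have hsum : 28 / 5 ≤ a2 + a3 + a4 + a5 + a6 + 1 := calc
      28 / 5 ≤ (1 + 4 * a2) + 1 := by linarith
      _ ≤ (a2 + a3 + a4 + a5 + a6) + 1 := add_le_add_left (by linarith) 1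
    refine Fpoly_corr4_negative_general h1 ?_ ?_ ?_ ?_ ?_ ?_ ?_ hb hsum <;> linarith
end
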